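/- Every 2K2-free bipartite finite simple graph G on n vertices is recolourable; moreover, for every ℓ ≥ χ(G)+1, any two ℓ-colourings of G are joined in the reconfiguration graph R_ℓ(G) by a path of length at most 4n (so the ℓ-recolouring diameter of G is at most 4n). -/

import Mathlib

/-!
In a bipartite graph with sides `s` and `sᶜ`, being `2K₂`-free makes the neighbourhoods of the
vertices of `s` a chain under inclusion, so some `a ∈ s` has `N(u) ⊆ N(a)` for all `u ∈ s`. In any
colouring `c` the colour `c a` is then absent from all these neighbourhoods, and `s` can be
recoloured entirely with `c a`, after which `sᶜ` can be recoloured entirely with any colour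
`y ≠ c a`. Given two `ℓ`-colourings with `ℓ ≥ 3`, choose `y` different from both of their colours at
`a`; the two-tone colourings so reached agree on `sᶜ`, and recolouring `s` joins them.
-/

/-- A graph is `2K₂`-free if it has no induced subgraph isomorphic to `2K₂`
(two vertex-disjoint edges with no edges between them). -/
def TwoK2Free {V : Type*} (G : SimpleGraph V) : Prop :=
  ¬ ∃ a b c d : V, G.Adj a b ∧ G.Adj c d ∧
      ¬ G.Adj a c ∧ ¬ G.Adj a d ∧ ¬ G.Adj b c ∧ ¬ G.Adj b d

/-- The reconfiguration graph `R_ℓ(G)` of the `ℓ`-colourings of `G`: vertices are the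
proper `ℓ`-colourings of `G`, two colourings being adjacent when they differ in colour
on exactly one vertex. -/
def recolGraph {V : Type*} (G : SimpleGraph V) (ℓ : ℕ) : SimpleGraph (G.Coloring (Fin ℓ)) where
  Adj c₁ c₂ := ∃! v : V, c₁ v ≠ c₂ v
  symm := by
    constructor
    rintro c₁ c₂ ⟨v, hv, hu⟩
    exact ⟨v, hv.symm, fun w hw => hu w hw.symm⟩
  loopless := by
    constructor
    rintro c ⟨v, hv, -⟩
    exact hv rfl

section Coloring

variable {V α : Type*} {G : SimpleGraph V} {s : Set V}

open scoped Classical in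
/-- The colouring obtained from `c` by giving the colour `x` to every vertex of the independent set
`s`; it is proper because `x` does not occur on the neighbours of `s`. -/
noncomputable def recolorOn (c : G.Coloring α) (hs : G.IsIndepSet s) (x : α)
    (hx : ∀ ⦃u v⦄, u ∈ s → G.Adj u v → c v ≠ x) : G.Coloring α :=
  .mk (fun v ↦ if v ∈ s then x else c v) fun {u v} huv ↦ by
    by_cases hu : u ∈ s <;> by_cases hv : v ∈ s
    · exact absurd huv (hs hu hv huv.ne)
    · simpa [hu, hv] using (hx hu huv).symm
    · simpa [hu, hv] using hx hv huv.symm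
    · simpa [hu, hv] using c.valid huv

theorem recolorOn_of_mem {c : G.Coloring α} {hs : G.IsIndepSet s} {x : α}
    {hx : ∀ ⦃u v⦄, u ∈ s → G.Adj u v → c v ≠ x} {v : V} (hv : v ∈ s) :
    recolorOn c hs x hx v = x :=
  if_pos hv

theorem recolorOn_of_notMem {c : G.Coloring α} {hs : G.IsIndepSet s} {x : α}
    {hx : ∀ ⦃u v⦄, u ∈ s → G.Adj u v → c v ≠ x} {v : V} (hv : v ∉ s) :
    recolorOn c hs x hx v = c v :=
  if_neg hv

open scoped Classical in
/-- The colouring of a bipartite graph with sides `s` and `sᶜ` that is constantly `x` on `s` and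
constantly `y` on `sᶜ`. -/
noncomputable def twoToneColoring (hs : G.IsIndepSet s) (hsc : G.IsIndepSet sᶜ) {x y : α}
    (hxy : x ≠ y) : G.Coloring α :=
  .mk (fun v ↦ if v ∈ s then x else y) fun {u v} huv ↦ by
    by_cases hu : u ∈ s <;> by_cases hv : v ∈ s
    · exact absurd huv (hs hu hv huv.ne)
    · simpa [hu, hv] using hxy
    · simpa [hu, hv] using hxy.symm
    · exact absurd huv (hsc hu hv huv.ne)

theorem twoToneColoring_of_mem {hs : G.IsIndepSet s} {hsc : G.IsIndepSet sᶜ} {x y : α}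
    {hxy : x ≠ y} {v : V} (hv : v ∈ s) : twoToneColoring hs hsc hxy v = x :=
  if_pos hv

theorem twoToneColoring_of_notMem {hs : G.IsIndepSet s} {hsc : G.IsIndepSet sᶜ} {x y : α}
    {hxy : x ≠ y} {v : V} (hv : v ∉ s) : twoToneColoring hs hsc hxy v = y :=
  if_neg hv

theorem exists_isIndepSet_and_isIndepSet_compl (hbip : G.Colorable 2) (u : V) :
    ∃ s : Set V, u ∈ s ∧ G.IsIndepSet s ∧ G.IsIndepSet sᶜ := by
  obtain ⟨f⟩ := hbip
  refine ⟨f.colorClass (f u), rfl, f.isIndepSet_colorClass _, fun v hv w hw _ hvw ↦ ?_⟩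
  have hfv : f v ≠ f u := hv
  have hfw : f w ≠ f u := hw
  have hfvw : f v ≠ f w := f.valid hvw
  omega

end Coloring

section NestedNeighborhoods

variable {V : Type*} {G : SimpleGraph V} {s : Set V}

theorem TwoK2Free.neighborSet_subset_or_subset (hG : TwoK2Free G) (hs : G.IsIndepSet s)
    (hsc : G.IsIndepSet sᶜ) {u v : V} (hu : u ∈ s) (hv : v ∈ s) :
    G.neighborSet u ⊆ G.neighborSet v ∨ G.neighborSet v ⊆ G.neighborSet u := by
  by_contra! h
  obtain ⟨⟨b, hub, hvb⟩, ⟨d, hvd, hud⟩⟩ := h.imp Set.not_subset.1 Set.not_subset.1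
  simp only [SimpleGraph.mem_neighborSet] at hub hvb hvd hud
  have notMem_of_adj {x y : V} (hx : x ∈ s) (hxy : G.Adj x y) : y ∉ s :=
    fun hy ↦ hs hx hy hxy.ne hxy
  have huv : ¬ G.Adj u v := fun huv ↦ notMem_of_adj hu huv hv
  have hbd : ¬ G.Adj b d := fun hbd ↦ hsc (notMem_of_adj hu hub) (notMem_of_adj hv hvd) hbd.ne hbd
  exact hG ⟨u, b, v, d, hub, hvd, huv, hud, fun hbv ↦ hvb hbv.symm, hbd⟩

theorem TwoK2Free.exists_forall_neighborSet_subset (hG : TwoK2Free G) (hs : G.IsIndepSet s)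
    (hsc : G.IsIndepSet sᶜ) (hfin : s.Finite) (hne : s.Nonempty) :
    ∃ a ∈ s, ∀ u ∈ s, G.neighborSet u ⊆ G.neighborSet a := by
  obtain ⟨a, ha, hmax⟩ := hfin.exists_maximalFor G.neighborSet s hne
  exact ⟨a, ha, fun u hu ↦ (hG.neighborSet_subset_or_subset hs hsc hu ha).elim id (hmax hu)⟩

end NestedNeighborhoods

section Distance

theorem exists_walk_length_le_of_edist_le {W : Type*} {H : SimpleGraph W} {u v : W} {n : ℕ}
    (h : H.edist u v ≤ n) : ∃ p : H.Walk u v, p.length ≤ n := by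
  obtain ⟨p, hp⟩ := SimpleGraph.exists_walk_of_edist_ne_top (h.trans_lt (ENat.natCast_lt_top n)).ne
  exact ⟨p, by exact_mod_cast hp.trans_le h⟩

variable {V : Type*} {G : SimpleGraph V} {s : Set V} {ℓ : ℕ}

theorem recolGraph_adj_recolorOn_singleton {c : G.Coloring (Fin ℓ)} {v : V} {x : Fin ℓ}
    {hs : G.IsIndepSet {v}} {hx : ∀ ⦃u w⦄, u ∈ ({v} : Set V) → G.Adj u w → c w ≠ x}
    (hv : c v ≠ x) : (recolGraph G ℓ).Adj c (recolorOn c hs x hx) := by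
  refine ⟨v, ?_, fun w hw ↦ ?_⟩
  · simpa only [recolorOn_of_mem (Set.mem_singleton v)] using hv
  · by_contra hwv
    exact hw (recolorOn_of_notMem (Set.mem_singleton_iff.not.2 hwv)).symm

theorem edist_recolGraph_le_encard_ne (c c' : G.Coloring (Fin ℓ))
    (hdiff : G.IsIndepSet {v | c v ≠ c' v}) :
    (recolGraph G ℓ).edist c c' ≤ {v | c v ≠ c' v}.encard := by
  obtain hinf | hfin := {v | c v ≠ c' v}.finite_or_infinite.symm
  · simp [hinf.encard_eq]
  generalize hD : {v | c v ≠ c' v} = D at hdiff hfin ⊢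
  induction D, hfin using Set.Finite.induction_on generalizing c with
  | empty =>
    have hcc' : c = c' := DFunLike.ext _ _ fun v ↦ not_not.1 (Set.eq_empty_iff_forall_notMem.1 hD v)
    simp [hcc']
  | @insert v D hvD _ ih =>
    have hmem (w : V) : c w ≠ c' w ↔ w = v ∨ w ∈ D := Set.ext_iff.1 hD w
    have hv : c v ≠ c' v := (hmem v).2 (.inl rfl)
    have hfree : ∀ ⦃u w⦄, u ∈ ({v} : Set V) → G.Adj u w → c w ≠ c' v := by
      rintro u w rfl huw hw
      have hwD : c w ≠ c' w := fun hww ↦ c'.valid huw (hw.symm.trans hww)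
      exact hdiff (.inl rfl) ((hmem w).1 hwD) huw.ne huw
    let d := recolorOn c (Set.pairwise_singleton v _) (c' v) hfree
    have hd : {w | d w ≠ c' w} = D := by
      ext w
      obtain rfl | hwv := eq_or_ne w v
      · simp [d, recolorOn_of_mem, hvD]
      · simp [d, recolorOn_of_notMem, hwv, hmem]
    calc (recolGraph G ℓ).edist c c'
      _ ≤ (recolGraph G ℓ).edist d c' + (recolGraph G ℓ).edist c d :=
        SimpleGraph.edist_triangle.trans_eq (add_comm _ _)
      _ ≤ D.encard + 1 := add_le_add (ih d hd (hdiff.mono (D.subset_insert v)))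
        (SimpleGraph.edist_eq_one_iff_adj.2 (recolGraph_adj_recolorOn_singleton hv)).le
      _ = (insert v D).encard := (Set.encard_insert_of_notMem hvD).symm

theorem edist_recolGraph_le_encard (hs : G.IsIndepSet s) {c c' : G.Coloring (Fin ℓ)}
    (hcc' : Set.EqOn c c' sᶜ) : (recolGraph G ℓ).edist c c' ≤ s.encard := by
  have hsub : {v | c v ≠ c' v} ⊆ s := fun v hv ↦ by_contra fun hvs ↦ hv (hcc' hvs)
  exact (edist_recolGraph_le_encard_ne c c' (hs.mono hsub)).trans (Set.encard_le_encard hsub)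

theorem edist_recolGraph_twoToneColoring_le (hs : G.IsIndepSet s) (hsc : G.IsIndepSet sᶜ) {a : V}
    (ha : ∀ u ∈ s, G.neighborSet u ⊆ G.neighborSet a) (c : G.Coloring (Fin ℓ)) {y : Fin ℓ}
    (hy : c a ≠ y) :
    (recolGraph G ℓ).edist c (twoToneColoring hs hsc hy) ≤ ENat.card V := by
  let m := recolorOn c hs (c a) fun u v hu huv ↦ (c.valid (ha u hu huv)).symm
  have hcm : (recolGraph G ℓ).edist c m ≤ s.encard :=
    edist_recolGraph_le_encard hs fun v hv ↦ (recolorOn_of_notMem hv).symm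
  have hmt : (recolGraph G ℓ).edist m (twoToneColoring hs hsc hy) ≤ sᶜ.encard := by
    refine edist_recolGraph_le_encard hsc fun v hv ↦ ?_
    rw [compl_compl] at hv
    exact (recolorOn_of_mem hv).trans (twoToneColoring_of_mem hv).symm
  calc (recolGraph G ℓ).edist c (twoToneColoring hs hsc hy)
    _ ≤ (recolGraph G ℓ).edist c m + (recolGraph G ℓ).edist m (twoToneColoring hs hsc hy) :=
      SimpleGraph.edist_triangle
    _ ≤ s.encard + sᶜ.encard := add_le_add hcm hmt
    _ = ENat.card V := by rw [Set.encard_add_encard_compl, Set.encard_univ]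

theorem edist_recolGraph_le_of_neighborSet_subset (hs : G.IsIndepSet s) (hsc : G.IsIndepSet sᶜ)
    {a : V} (ha : ∀ u ∈ s, G.neighborSet u ⊆ G.neighborSet a) (hℓ : 3 ≤ ℓ)
    (c₁ c₂ : G.Coloring (Fin ℓ)) :
    (recolGraph G ℓ).edist c₁ c₂ ≤ 2 * ENat.card V + s.encard := by
  obtain ⟨y, hy₁, hy₂⟩ : ∃ y, y ≠ c₁ a ∧ y ≠ c₂ a :=
    ENat.exists_ne_ne_of_three_le (by simpa using hℓ) _ _
  let t₁ := twoToneColoring hs hsc hy₁.symm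
  let t₂ := twoToneColoring hs hsc hy₂.symm
  have h₁ : (recolGraph G ℓ).edist c₁ t₁ ≤ ENat.card V :=
    edist_recolGraph_twoToneColoring_le hs hsc ha c₁ hy₁.symm
  have h₂ : (recolGraph G ℓ).edist t₂ c₂ ≤ ENat.card V :=
    SimpleGraph.edist_comm.trans_le (edist_recolGraph_twoToneColoring_le hs hsc ha c₂ hy₂.symm)
  have h₁₂ : (recolGraph G ℓ).edist t₁ t₂ ≤ s.encard := edist_recolGraph_le_encard hs fun v hv ↦
    (twoToneColoring_of_notMem hv).trans (twoToneColoring_of_notMem hv).symm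
  calc (recolGraph G ℓ).edist c₁ c₂
    _ ≤ (recolGraph G ℓ).edist c₁ t₁ + (recolGraph G ℓ).edist t₁ c₂ := SimpleGraph.edist_triangle
    _ ≤ (recolGraph G ℓ).edist c₁ t₁ +
        ((recolGraph G ℓ).edist t₁ t₂ + (recolGraph G ℓ).edist t₂ c₂) := by
      gcongr
      exact SimpleGraph.edist_triangle
    _ ≤ ENat.card V + (s.encard + ENat.card V) := by gcongr
    _ = 2 * ENat.card V + s.encard := by ring

theorem TwoK2Free.edist_recolGraph_le [Finite V] (hG : TwoK2Free G) (hbip : G.Colorable 2)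
    (hℓ : 3 ≤ ℓ) (c₁ c₂ : G.Coloring (Fin ℓ)) :
    (recolGraph G ℓ).edist c₁ c₂ ≤ 3 * ENat.card V := by
  obtain _ | ⟨⟨u⟩⟩ := isEmpty_or_nonempty V
  · simp [show c₁ = c₂ from DFunLike.ext _ _ isEmptyElim]
  obtain ⟨s, hu, hs, hsc⟩ := exists_isIndepSet_and_isIndepSet_compl hbip u
  obtain ⟨a, -, ha⟩ := hG.exists_forall_neighborSet_subset hs hsc s.toFinite ⟨u, hu⟩
  calc (recolGraph G ℓ).edist c₁ c₂
    _ ≤ 2 * ENat.card V + s.encard := edist_recolGraph_le_of_neighborSet_subset hs hsc ha hℓ c₁ c₂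
    _ ≤ 2 * ENat.card V + ENat.card V := by
      gcongr
      exact Set.encard_le_card
    _ = 3 * ENat.card V := by ring

theorem edist_recolGraph_bot_le (c₁ c₂ : (⊥ : SimpleGraph V).Coloring (Fin ℓ)) :
    (recolGraph ⊥ ℓ).edist c₁ c₂ ≤ ENat.card V :=
  (edist_recolGraph_le_encard_ne c₁ c₂ fun _ _ _ _ _ ↦ id).trans Set.encard_le_card

end Distance

/-- every 2K₂-free bipartite graph is recolourable, with ℓ-recolouring
diameter at most `4n` for every `ℓ ≥ χ(G) + 1`. -/
theorem stmt1 {V : Type*} [Fintype V] (G : SimpleGraph V)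
    (hG : TwoK2Free G) (hbip : G.Colorable 2) :
    ∀ ℓ : ℕ, G.chromaticNumber + 1 ≤ (ℓ : ℕ∞) →
      (recolGraph G ℓ).Connected ∧
      ∀ c₁ c₂ : G.Coloring (Fin ℓ),
        ∃ p : (recolGraph G ℓ).Walk c₁ c₂, p.length ≤ 4 * Fintype.card V := by
  intro ℓ hℓ
  have hdist (c₁ c₂ : G.Coloring (Fin ℓ)) :
      (recolGraph G ℓ).edist c₁ c₂ ≤ 4 * ENat.card V := by
    obtain rfl | hne := eq_or_ne G ⊥
    · exact (edist_recolGraph_bot_le c₁ c₂).trans (le_mul_of_one_le_left' (by norm_num))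
    · have hχ : G.chromaticNumber = 2 := SimpleGraph.chromaticNumber_eq_two_iff.2 ⟨hbip, hne⟩
      have hℓ₃ : 3 ≤ ℓ := by
        rw [hχ] at hℓ
        exact_mod_cast hℓ
      exact (hG.edist_recolGraph_le hbip hℓ₃ c₁ c₂).trans (by gcongr; norm_num)
  have hwalk (c₁ c₂ : G.Coloring (Fin ℓ)) :
      ∃ p : (recolGraph G ℓ).Walk c₁ c₂, p.length ≤ 4 * Fintype.card V :=
    exists_walk_length_le_of_edist_le (by simpa using hdist c₁ c₂)
  have : Nonempty (G.Coloring (Fin ℓ)) :=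
    SimpleGraph.chromaticNumber_le_iff_colorable.1 (le_self_add.trans hℓ)
  exact ⟨⟨fun c₁ c₂ ↦ (hwalk c₁ c₂).elim fun p _ ↦ p.reachable⟩, hwalk⟩
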